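/- A small category 𝒞 with pairwise coproducts is contractible, i.e., its classifying space B𝒞 is a contractible topological space. Dually, a small category with pairwise products is contractible. -/

import Mathlib

open CategoryTheory CategoryTheory.Limits
open Opposite

noncomputable section

/-- The point of the realization of `nerve C` given by a chain and barycentric coordinates. -/
def npt {C : Type} [SmallCategory C] {a : ℕ} (σ : Fin (a + 1) ⥤ C)
    (p : stdSimplex ℝ (Fin (a + 1))) : SSet.toTop.obj (nerve C) :=
  TopCat.toSSetObjEquiv (SSet.toTop.obj (nerve C)) (op (SimplexCategory.mk a))
    ((sSetTopAdj.unit.app (nerve C)).app (op (SimplexCategory.mk a)) σ) p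

lemma continuous_npt {C : Type} [SmallCategory C] {a : ℕ} (σ : Fin (a + 1) ⥤ C) :
    Continuous (npt σ) :=
  ContinuousMap.continuous (TopCat.toSSetObjEquiv (SSet.toTop.obj (nerve C))
    (op (SimplexCategory.mk a))
    ((sSetTopAdj.unit.app (nerve C)).app (op (SimplexCategory.mk a)) σ))

lemma npt_comp {C : Type} [SmallCategory C] {a b : ℕ} (f : Fin (a + 1) →o Fin (b + 1))
    (σ : Fin (b + 1) ⥤ C) (p : stdSimplex ℝ (Fin (a + 1))) :
    npt (f.monotone.functor ⋙ σ) p = npt σ (stdSimplex.map f p) := by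
  have h := (sSetTopAdj.unit.app (nerve C)).naturality (SimplexCategory.mkHom f).op
  have h2 := ConcreteCategory.congr_hom h σ
  have h3 := TopCat.toSSetObjEquiv_naturality_apply (SimplexCategory.mkHom f)
    ((sSetTopAdj.unit.app (nerve C)).app (op (SimplexCategory.mk b)) σ) p
  refine Eq.trans ?_ h3
  exact congrArg (fun z => TopCat.toSSetObjEquiv (SSet.toTop.obj (nerve C))
    (op (SimplexCategory.mk a)) z p) h2

lemma npt_functor {C D : Type} [SmallCategory C] [SmallCategory D] {a : ℕ} (F : C ⥤ D)
    (σ : Fin (a + 1) ⥤ C) (p : stdSimplex ℝ (Fin (a + 1))) :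
    SSet.toTop.map (nerveMap F) (npt σ p) = npt (σ ⋙ F) p := by
  have h := sSetTopAdj.unit.naturality (nerveMap F)
  have h2 := ConcreteCategory.congr_hom (NatTrans.congr_app h (op (SimplexCategory.mk a))) σ
  exact (congrArg (fun z => TopCat.toSSetObjEquiv (SSet.toTop.obj (nerve D))
    (op (SimplexCategory.mk a)) z p) h2).symm

lemma npt_hom_ext {C : Type} [SmallCategory C] {Z : TopCat.{0}}
    (f g : SSet.toTop.obj (nerve C) ⟶ Z)
    (h : ∀ (a : ℕ) (σ : Fin (a + 1) ⥤ C) (p : stdSimplex ℝ (Fin (a + 1))),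
      f (npt σ p) = g (npt σ p)) : f = g := by
  apply (sSetTopAdj.homEquiv _ _).injective
  ext n σ
  apply (TopCat.toSSetObjEquiv Z n).injective
  ext p
  exact h n.unop.len σ p

lemma npt_desc {C : Type} [SmallCategory C] {Z : TopCat.{0}}
    (φ : ∀ (a : ℕ) (_ : Fin (a + 1) ⥤ C), C(stdSimplex ℝ (Fin (a + 1)), Z))
    (hφ : ∀ (a b : ℕ) (f : Fin (a + 1) →o Fin (b + 1)) (σ : Fin (b + 1) ⥤ C)
      (p : stdSimplex ℝ (Fin (a + 1))),
      φ a (f.monotone.functor ⋙ σ) p = φ b σ (stdSimplex.map f p)) :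
    ∃ g : SSet.toTop.obj (nerve C) ⟶ Z,
      ∀ (a : ℕ) (σ : Fin (a + 1) ⥤ C) (p : stdSimplex ℝ (Fin (a + 1))),
        g (npt σ p) = φ a σ p := by
  let ψ : nerve C ⟶ TopCat.toSSet.obj Z :=
    { app := fun n => ↾fun σ => (TopCat.toSSetObjEquiv Z n).symm (φ n.unop.len σ)
      naturality := by
        intro m n f
        ext σ
        apply (TopCat.toSSetObjEquiv Z n).injective
        ext p
        exact hφ n.unop.len m.unop.len f.unop.toOrderHom σ p }
  refine ⟨(sSetTopAdj.homEquiv _ _).symm ψ, fun a σ p => ?_⟩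
  have h : sSetTopAdj.homEquiv _ _ ((sSetTopAdj.homEquiv _ _).symm ψ) = ψ := by simp
  have h2 := ConcreteCategory.congr_hom (NatTrans.congr_app h (op (SimplexCategory.mk a))) σ
  exact (congrArg (fun z => TopCat.toSSetObjEquiv Z
    (op (SimplexCategory.mk a)) z p) h2)

lemma map_val {X Y : Type} [Fintype X] [Fintype Y] [DecidableEq Y] (f : X → Y)
    (p : stdSimplex ℝ X) (y : Y) :
    stdSimplex.map f p y = ∑ x with f x = y, p x := by
  simp [FunOnFinite.linearMap_apply_apply]

/-- Reduction to the support. -/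
lemma exists_support {a : ℕ} (p : stdSimplex ℝ (Fin (a + 1))) :
    ∃ (b : ℕ) (δ : Fin (b + 1) →o Fin (a + 1)) (q : stdSimplex ℝ (Fin (b + 1))),
      stdSimplex.map δ q = p ∧ ∀ i, p (δ i) ≠ 0 := by
  classical
  set T : Finset (Fin (a + 1)) := Finset.univ.filter (fun i => p i ≠ 0) with hT
  have hne : T.Nonempty := by
    by_contra hc
    have h0 : ∀ i, p i = 0 := by
      intro i
      by_contra hi
      exact hc ⟨i, by simp [hT, hi]⟩
    have := stdSimplex.sum_eq_one p
    simp [h0] at this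
  obtain ⟨b, hb⟩ : ∃ b, T.card = b + 1 := ⟨T.card - 1, by have := hne.card_pos; omega⟩
  let δ := T.orderEmbOfFin hb
  have hsum : ∀ (s : Finset (Fin (a+1))) , ∑ i with δ i ∈ s, p (δ i) = ∑ i ∈ s, p i := by
    intro s
    refine (Finset.sum_map (Finset.univ.filter (fun i => δ i ∈ s)) δ.toEmbedding
      (fun j => p j)).symm.trans ?_
    apply Finset.sum_subset
    · intro x hx
      simp only [Finset.mem_map, Finset.mem_filter] at hx
      obtain ⟨i, hi, rfl⟩ := hx
      exact hi.2
    · intro x hx hx2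
      by_contra h
      have hxT : x ∈ T := by simp [hT, h]
      have : x ∈ Set.range δ := by rw [Finset.range_orderEmbOfFin]; exact hxT
      obtain ⟨i, rfl⟩ := this
      apply hx2
      simp only [Finset.mem_map, Finset.mem_filter]
      exact ⟨i, ⟨Finset.mem_univ _, hx⟩, rfl⟩
  refine ⟨b, δ.toOrderHom, ⟨fun i => p (δ i), fun i => p.2.1 _, ?_⟩, ?_, ?_⟩
  · have := hsum Finset.univ
    simp only [Finset.mem_univ, Finset.filter_true] at this
    rw [this]; exact stdSimplex.sum_eq_one p
  · ext i
    rw [map_val]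
    have := hsum {i}
    simp only [Finset.mem_singleton, Finset.sum_singleton] at this
    exact this
  · intro i
    have : δ i ∈ T := Finset.orderEmbOfFin_mem T hb i
    simpa [hT] using this

lemma stdmap_ne_zero {X Y : Type} [Fintype X] [Fintype Y] (f : X → Y)
    (p : stdSimplex ℝ X) (x : X) (h : p x ≠ 0) : stdSimplex.map f p (f x) ≠ 0 := by
  classical
  rw [map_val]
  apply ne_of_gt
  apply Finset.sum_pos' (fun i _ => p.2.1 i)
  exact ⟨x, by simp, lt_of_le_of_ne (p.2.1 x) (Ne.symm h)⟩

lemma exists_of_stdmap {X Y : Type} [Fintype X] [Fintype Y] (f : X → Y)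
    (p : stdSimplex ℝ X) (y : Y) (h : stdSimplex.map f p y ≠ 0) : ∃ x, f x = y := by
  classical
  rw [map_val] at h
  obtain ⟨x, hx, _⟩ := Finset.exists_ne_zero_of_sum_ne_zero h
  exact ⟨x, by simpa using hx⟩

/-- Points in the realization of the nerve of a finite poset are determined by
their barycentric coordinates. -/
lemma npt_eq_of_map_eq {P : Type} [PartialOrder P] [Fintype P] {a b : ℕ}
    (σ : Fin (a + 1) →o P) (τ : Fin (b + 1) →o P)
    (y : stdSimplex ℝ (Fin (a + 1))) (z : stdSimplex ℝ (Fin (b + 1)))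
    (h : stdSimplex.map σ y = stdSimplex.map τ z) :
    npt σ.monotone.functor y = npt τ.monotone.functor z := by
  classical
  set w := stdSimplex.map σ y with hw
  let S := {x : P // w x ≠ 0}
  have htot : ∀ u v : S, u ≤ v ∨ v ≤ u := by
    rintro ⟨u, hu⟩ ⟨v, hv⟩
    obtain ⟨i, rfl⟩ := exists_of_stdmap σ y u hu
    obtain ⟨j, rfl⟩ := exists_of_stdmap σ y v hv
    rcases le_total i j with hij | hij
    · exact Or.inl (σ.monotone hij)
    · exact Or.inr (σ.monotone hij)
  let : LinearOrder S :=
    { (inferInstance : PartialOrder S) with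
      le_total := htot
      toDecidableLE := Classical.decRel _ }
  have hne : Nonempty S := by
    obtain ⟨_, δ, _, _, hδ⟩ := exists_support y
    exact ⟨⟨σ (δ 0), stdmap_ne_zero _ _ _ (hδ 0)⟩⟩
  obtain ⟨c, hc⟩ : ∃ c, Fintype.card S = c + 1 :=
    ⟨Fintype.card S - 1, by have := Fintype.card_pos (α := S); omega⟩
  let e : Fin (c + 1) ≃o S := Fintype.orderIsoFinOfCardEq S hc
  let ι : Fin (c + 1) →o P := ⟨fun i => (e i).1, fun i j hij => e.monotone hij⟩
  have hι : Function.Injective ι := fun i j hij => e.injective (Subtype.ext hij)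
  have key : ∀ (d : ℕ) (ρ : Fin (d + 1) →o P) (q : stdSimplex ℝ (Fin (d + 1))),
      stdSimplex.map ρ q = w → ∃ v : stdSimplex ℝ (Fin (c + 1)),
        stdSimplex.map ι v = w ∧ npt ρ.monotone.functor q = npt ι.monotone.functor v := by
    intro d ρ q hq
    obtain ⟨d', δ, q', hδ, hne⟩ := exists_support q
    let ε : Fin (d' + 1) →o Fin (c + 1) :=
      ⟨fun i => e.symm ⟨ρ (δ i), by rw [← hq]; exact stdmap_ne_zero _ _ _ (hne i)⟩,
        fun i j hij => e.symm.monotone (ρ.monotone (δ.monotone hij))⟩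
    have hε : ∀ i, ι (ε i) = ρ (δ i) := by
      intro i
      change (e (e.symm _)).1 = _
      rw [OrderIso.apply_symm_apply]
    refine ⟨stdSimplex.map ε q', ?_, ?_⟩
    · rw [stdSimplex.map_comp_apply, ← hq, ← hδ, stdSimplex.map_comp_apply]
      congr 1
      funext i
      exact hε i
    · rw [← npt_comp, ← hδ, ← npt_comp]
      congr 1
      refine CategoryTheory.Functor.ext (fun i => (hε i).symm) ?_
      intros
      exact Subsingleton.elim _ _
  obtain ⟨v, hv, hv2⟩ := key _ σ y hw.symm
  obtain ⟨v', hv', hv2'⟩ := key _ τ z h.symm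
  rw [hv2, hv2']
  congr 1
  ext i
  have h1 := congrArg (fun s : stdSimplex ℝ P => s (ι i)) (hv.trans hv'.symm)
  simp only [map_val, hι.eq_iff] at h1
  rw [Finset.filter_eq', if_pos (Finset.mem_univ _)] at h1
  simpa only [Finset.sum_singleton] using h1

/-- The point with given barycentric coordinates (junk if the support is not a chain). -/
def bpt {P : Type} [PartialOrder P] [Fintype P] [Nonempty P] (w : stdSimplex ℝ P) :
    SSet.toTop.obj (nerve P) :=
  open Classical in
  if h : ∃ (a : ℕ) (σ : Fin (a + 1) →o P) (y : stdSimplex ℝ (Fin (a + 1))),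
      stdSimplex.map σ y = w then
    npt h.choose_spec.choose.monotone.functor h.choose_spec.choose_spec.choose
  else npt (a := 0) ((Functor.const _).obj (Classical.arbitrary P)) default

lemma bpt_map {P : Type} [PartialOrder P] [Fintype P] [Nonempty P] {a : ℕ}
    (σ : Fin (a + 1) →o P) (y : stdSimplex ℝ (Fin (a + 1))) :
    bpt (stdSimplex.map σ y) = npt σ.monotone.functor y := by
  have h : ∃ (a : ℕ) (σ' : Fin (a + 1) →o P) (y' : stdSimplex ℝ (Fin (a + 1))),
      stdSimplex.map σ' y' = stdSimplex.map σ y := ⟨a, σ, y, rfl⟩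
  rw [bpt, dif_pos h]
  exact npt_eq_of_map_eq _ _ _ _ h.choose_spec.choose_spec.choose_spec

lemma bpt_natural {P Q : Type} [PartialOrder P] [Fintype P] [Nonempty P]
    [PartialOrder Q] [Fintype Q] [Nonempty Q] (g : P →o Q) {a : ℕ}
    (σ : Fin (a + 1) →o P) (y : stdSimplex ℝ (Fin (a + 1))) :
    SSet.toTop.map (nerveMap g.monotone.functor) (bpt (stdSimplex.map σ y)) =
      bpt (stdSimplex.map g (stdSimplex.map σ y)) := by
  rw [bpt_map, npt_functor, stdSimplex.map_comp_apply]
  exact (bpt_map (g.comp σ) y).symm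

/-- Points supported on the range of an injective map. -/
def suppOn {P : Type} [Fintype P] {a : ℕ} (σ : Fin (a + 1) → P) : Set (stdSimplex ℝ P) :=
  {w | ∀ x, x ∉ Set.range σ → w x = 0}

lemma isClosed_suppOn {P : Type} [Fintype P] {a : ℕ} (σ : Fin (a + 1) → P) :
    IsClosed (suppOn σ) := by
  simp only [suppOn, Set.ofPred_forall]
  refine isClosed_iInter fun x => isClosed_iInter fun _ => ?_
  exact isClosed_eq ((continuous_apply x).comp continuous_subtype_val) continuous_const

/-- Coordinates along an injective map. -/
def pull {P : Type} [Fintype P] {a : ℕ} (σ : Fin (a + 1) → P)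
    (hσ : Function.Injective σ) (w : suppOn σ) : stdSimplex ℝ (Fin (a + 1)) :=
  ⟨fun i => w.1 (σ i), fun _ => w.1.2.1 _, by
    classical
    rw [← stdSimplex.sum_eq_one w.1]
    exact Fintype.sum_of_injective σ hσ _ _ (fun x hx => w.2 x hx) (fun _ => rfl)⟩

lemma map_pull {P : Type} [Fintype P] {a : ℕ} (σ : Fin (a + 1) → P)
    (hσ : Function.Injective σ) (w : suppOn σ) : stdSimplex.map σ (pull σ hσ w) = w.1 := by
  classical
  ext x
  rw [map_val]
  by_cases hx : x ∈ Set.range σ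
  · obtain ⟨i, rfl⟩ := hx
    simp only [hσ.eq_iff]
    rw [Finset.filter_eq', if_pos (Finset.mem_univ _), Finset.sum_singleton]
    rfl
  · rw [w.2 x hx]
    apply Finset.sum_eq_zero
    intro i hi
    exact absurd ⟨i, by simpa using hi⟩ hx

lemma continuousOn_bpt {P : Type} [PartialOrder P] [Fintype P] [Nonempty P] {a : ℕ}
    (σ : Fin (a + 1) →o P) (hσ : Function.Injective σ) :
    ContinuousOn (bpt (P := P)) (suppOn σ) := by
  rw [continuousOn_iff_continuous_domRestrict]
  have : (suppOn σ).domRestrict (bpt (P := P)) =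
      fun w => npt σ.monotone.functor (pull σ hσ w) := by
    funext w
    rw [← bpt_map, map_pull]
    rfl
  rw [this]
  refine (continuous_npt _).comp (Continuous.subtype_mk ?_ _)
  refine continuous_pi fun i => ?_
  exact (continuous_apply (σ i)).comp (continuous_subtype_val.comp continuous_subtype_val)

/-- Partial sums. -/
def psum {n : ℕ} (p : stdSimplex ℝ (Fin (n + 1))) (j : ℕ) : ℝ := ∑ i with i.val < j, p i

lemma psum_zero {n : ℕ} (p : stdSimplex ℝ (Fin (n + 1))) : psum p 0 = 0 := by simp [psum]

lemma psum_succ {n : ℕ} (p : stdSimplex ℝ (Fin (n + 1))) (i : Fin (n + 1)) :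
    psum p (i.val + 1) = psum p i.val + p i := by
  have : (Finset.univ.filter fun j : Fin (n + 1) => j.val < i.val + 1) =
      insert i (Finset.univ.filter fun j : Fin (n + 1) => j.val < i.val) := by
    ext j
    simp [Fin.ext_iff]
    omega
  rw [psum, this, Finset.sum_insert (by simp), add_comm]
  rfl

lemma psum_last {n : ℕ} (p : stdSimplex ℝ (Fin (n + 1))) : psum p (n + 1) = 1 := by
  rw [← stdSimplex.sum_eq_one p, psum]
  congr 1
  ext i
  simp
  omega

lemma psum_mono {n : ℕ} (p : stdSimplex ℝ (Fin (n + 1))) : Monotone (psum p) := by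
  intro i j hij
  apply Finset.sum_le_sum_of_subset_of_nonneg
  · intro k
    simp
    omega
  · intro k _ _
    exact p.2.1 k

lemma continuous_psum {n : ℕ} (j : ℕ) :
    Continuous (fun p : stdSimplex ℝ (Fin (n + 1)) => psum p j) := by
  unfold psum
  refine continuous_finsetSum _ fun i _ => ?_
  exact (continuous_apply i).comp continuous_subtype_val

lemma sum_lt_telescope {n : ℕ} (p : stdSimplex ℝ (Fin (n + 1))) (φ : ℝ → ℝ) (N : ℕ)
    (hN : N ≤ n + 1) :
    ∑ i : Fin (n + 1) with i.val < N, (φ (psum p (i.val + 1)) - φ (psum p i.val)) =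
      φ (psum p N) - φ 0 := by
  induction N with
  | zero => simp [psum_zero]
  | succ N ih =>
    have : (Finset.univ.filter fun j : Fin (n + 1) => j.val < N + 1) =
        insert (⟨N, hN⟩ : Fin (n + 1))
          (Finset.univ.filter fun j : Fin (n + 1) => j.val < N) := by
      ext j
      simp [Fin.ext_iff]
      omega
    rw [this, Finset.sum_insert (by simp), ih (by omega)]
    simp

lemma sum_fiber {m n : ℕ} (p : stdSimplex ℝ (Fin (m + 1))) (f : Fin (m + 1) →o Fin (n + 1))
    (φ : ℝ → ℝ) (q : Fin (n + 1)) :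
    ∑ i with f i = q, (φ (psum p (i.val + 1)) - φ (psum p i.val)) =
      φ (psum (stdSimplex.map f p) (q.val + 1)) - φ (psum (stdSimplex.map f p) q.val) := by
  have hcut : ∀ Q : ℕ, ∃ N ≤ m + 1, ∀ i : Fin (m + 1), (f i).val < Q ↔ i.val < N := by
    intro Q
    have hex : ∃ N, ∀ i : Fin (m + 1), (f i).val < Q → i.val < N := ⟨m + 1, fun i _ => i.2⟩
    classical
    refine ⟨Nat.find hex, Nat.find_min' hex fun i _ => i.2, fun i => ⟨Nat.find_spec hex i, ?_⟩⟩
    intro hi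
    have := Nat.find_min hex hi
    push Not at this
    obtain ⟨j, hj, hij⟩ := this
    exact lt_of_le_of_lt (f.monotone (Fin.le_def.2 hij)) hj
  have hps : ∀ Q : ℕ, psum (stdSimplex.map f p) Q = ∑ i with (f i).val < Q, p i := by
    intro Q
    simp only [psum, map_val]
    rw [← Finset.sum_biUnion]
    · apply Finset.sum_congr _ (fun _ _ => rfl)
      ext i
      simp
    · intro a _ b _ hab
      simp only [Function.onFun, Finset.disjoint_left, Finset.mem_filter]
      rintro x ⟨_, rfl⟩ ⟨_, h⟩
      exact hab h
  have L : ∀ Q : ℕ, ∑ i with (f i).val < Q, (φ (psum p (i.val + 1)) - φ (psum p i.val)) =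
      φ (psum (stdSimplex.map f p) Q) - φ 0 := by
    intro Q
    obtain ⟨N, hN, h⟩ := hcut Q
    rw [hps]
    simp only [h]
    exact sum_lt_telescope p φ N hN
  have h1 := L (q.val + 1)
  have h2 := L q.val
  have : (Finset.univ.filter fun i => (f i).val < q.val + 1) =
      (Finset.univ.filter fun i => (f i).val < q.val) ∪ (Finset.univ.filter fun i => f i = q) := by
    ext i
    simp [Fin.ext_iff]
    omega
  rw [this, Finset.sum_union] at h1
  · linarith
  · simp only [Finset.disjoint_left, Finset.mem_filter]
    rintro x ⟨_, h⟩ ⟨_, rfl⟩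
    exact absurd h (lt_irrefl _)

/-- Barycentric coordinates in the prism. -/
def wfun {n : ℕ} (p : stdSimplex ℝ (Fin (n + 1))) (r : ℝ) (x : Fin 2 × Fin (n + 1)) : ℝ :=
  if x.1 = 0 then min (psum p (x.2.val + 1)) r - min (psum p x.2.val) r
  else max (psum p (x.2.val + 1)) r - max (psum p x.2.val) r

/-- Barycentric coordinates in the prism, as a point of the standard simplex. -/
def wpt {n : ℕ} (p : stdSimplex ℝ (Fin (n + 1))) (r : ℝ) : stdSimplex ℝ (Fin 2 × Fin (n + 1)) :=
  ⟨wfun p r, by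
    intro x
    have := psum_mono p (Nat.le_succ x.2.val)
    unfold wfun
    split_ifs
    · exact sub_nonneg.2 (min_le_min_right _ this)
    · exact sub_nonneg.2 (max_le_max_right _ this), by
    rw [Fintype.sum_prod_type, Fin.sum_univ_two, ← Finset.sum_add_distrib,
      ← stdSimplex.sum_eq_one p]
    refine Finset.sum_congr rfl fun i _ => ?_
    have h1 := min_add_max (psum p (i.val + 1)) r
    have h2 := min_add_max (psum p i.val) r
    have h3 := psum_succ p i
    simp only [wfun, if_true, one_ne_zero, if_false]
    linarith⟩

lemma wpt_apply {n : ℕ} (p : stdSimplex ℝ (Fin (n + 1))) (r : ℝ) (x : Fin 2 × Fin (n + 1)) :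
    wpt p r x = wfun p r x := rfl

lemma continuous_wpt {n : ℕ} :
    Continuous (fun x : stdSimplex ℝ (Fin (n + 1)) × ℝ => wpt x.1 x.2) := by
  refine Continuous.subtype_mk (continuous_pi fun i => ?_) _
  have h1 := (continuous_psum (n := n) (i.2.val + 1)).comp (continuous_fst (Y := ℝ))
  have h2 := (continuous_psum (n := n) (i.2.val)).comp (continuous_fst (Y := ℝ))
  unfold wfun
  split_ifs
  · exact (h1.min continuous_snd).sub (h2.min continuous_snd)
  · exact (h1.max continuous_snd).sub (h2.max continuous_snd)

/-- The map of prisms. -/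
def prismMap {m n : ℕ} (f : Fin (m + 1) →o Fin (n + 1)) :
    Fin 2 × Fin (m + 1) →o Fin 2 × Fin (n + 1) :=
  ⟨fun x => (x.1, f x.2), fun _ _ h => ⟨h.1, f.monotone h.2⟩⟩

lemma map_wpt {m n : ℕ} (f : Fin (m + 1) →o Fin (n + 1)) (p : stdSimplex ℝ (Fin (m + 1)))
    (r : ℝ) : stdSimplex.map (prismMap f) (wpt p r) = wpt (stdSimplex.map f p) r := by
  ext ⟨b, q⟩
  rw [map_val, Finset.sum_filter, Fintype.sum_prod_type, Finset.sum_eq_single b]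
  · rw [wpt_apply]
    have hc : ∀ i : Fin (m + 1), (prismMap f (b, i) = (b, q)) ↔ f i = q := by
      intro i
      change ((b, f i) = (b, q)) ↔ _
      simp
    simp only [hc]
    rw [← Finset.sum_filter]
    simp only [wpt_apply, wfun]
    by_cases hb : b = 0
    · simp only [hb, if_true]
      exact sum_fiber p f (fun s => min s r) q
    · simp only [hb, if_false]
      exact sum_fiber p f (fun s => max s r) q
  · intro b' _ hb
    apply Finset.sum_eq_zero
    intro i _
    rw [if_neg]
    intro h
    exact hb (congrArg Prod.fst h)
  · intro h
    exact absurd (Finset.mem_univ _) h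

/-- The maximal chains in the prism. -/
def chain {n : ℕ} (k : Fin (n + 1)) : Fin (n + 1 + 1) →o Fin 2 × Fin (n + 1) :=
  ⟨fun i => (if i ≤ k.castSucc then 0 else 1, k.predAbove i), by
    intro i j hij
    refine ⟨?_, Fin.predAbove_right_monotone k hij⟩
    dsimp only
    split_ifs with h1 h2
    · exact le_rfl
    · exact Fin.zero_le _
    · exact absurd (hij.trans (by assumption)) h1
    · exact le_rfl⟩

lemma chain_injective {n : ℕ} (k : Fin (n + 1)) : Function.Injective (chain k) := by
  intro i j hij
  have h1 : (if i ≤ k.castSucc then (0 : Fin 2) else 1) = if j ≤ k.castSucc then 0 else 1 :=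
    congrArg Prod.fst hij
  have h2 : k.predAbove i = k.predAbove j := congrArg Prod.snd hij
  rcases le_or_gt i k.castSucc with hi | hi <;> rcases le_or_gt j k.castSucc with hj | hj
  · rw [Fin.predAbove_of_le_castSucc _ _ hi, Fin.predAbove_of_le_castSucc _ _ hj] at h2
    simpa using h2
  · simp [hi, not_le.2 hj] at h1
  · simp [hj, not_le.2 hi] at h1
  · rw [Fin.predAbove_of_castSucc_lt _ _ hi, Fin.predAbove_of_castSucc_lt _ _ hj] at h2
    simpa using h2

lemma wpt_mem {n : ℕ} (p : stdSimplex ℝ (Fin (n + 1))) (r : ℝ) (k : Fin (n + 1))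
    (h1 : psum p k.val ≤ r) (h2 : r ≤ psum p (k.val + 1)) : wpt p r ∈ suppOn (chain k) := by
  rintro ⟨b, i⟩ hx
  rw [wpt_apply, wfun]
  by_cases hb : b = 0
  · subst hb
    simp only [if_true]
    have hk : k < i := by
      by_contra hc
      apply hx
      have hle : i.castSucc ≤ k.castSucc := by simpa using hc
      refine ⟨i.castSucc, ?_⟩
      change ((if i.castSucc ≤ k.castSucc then 0 else 1, k.predAbove i.castSucc) :
        Fin 2 × Fin (n + 1)) = _
      rw [if_pos hle, Fin.predAbove_of_le_castSucc _ _ hle]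
      simp
    have h3 : r ≤ psum p i.val := h2.trans (psum_mono p (by omega))
    have h4 : r ≤ psum p (i.val + 1) := h3.trans (psum_mono p (by omega))
    rw [min_eq_right h3, min_eq_right h4, sub_self]
  · have hb1 : b = 1 := by omega
    subst hb1
    simp only [one_ne_zero, if_false]
    have hk : i < k := by
      by_contra hc
      apply hx
      have hlt : k.castSucc < i.succ := by
        rw [Fin.lt_def]; simp; omega
      refine ⟨i.succ, ?_⟩
      change ((if i.succ ≤ k.castSucc then 0 else 1, k.predAbove i.succ) :
        Fin 2 × Fin (n + 1)) = _
      rw [if_neg (not_le.2 hlt), Fin.predAbove_of_castSucc_lt _ _ hlt]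
      simp
    have h3 : psum p (i.val + 1) ≤ r := (psum_mono p (by omega)).trans h1
    have h4 : psum p i.val ≤ r := (psum_mono p (by omega)).trans h3
    rw [max_eq_right h3, max_eq_right h4, sub_self]

lemma exists_cut {n : ℕ} (p : stdSimplex ℝ (Fin (n + 1))) (r : ℝ) (h0 : 0 ≤ r) (h1 : r ≤ 1) :
    ∃ k : Fin (n + 1), psum p k.val ≤ r ∧ r ≤ psum p (k.val + 1) := by
  classical
  have h00 : psum p 0 ≤ r := by rw [psum_zero]; exact h0
  have hk := Nat.findGreatest_spec (P := fun k => psum p k ≤ r) (Nat.zero_le n) h00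
  have hkn := Nat.findGreatest_le (P := fun k => psum p k ≤ r) n
  refine ⟨⟨Nat.findGreatest (fun k => psum p k ≤ r) n, by omega⟩, hk, ?_⟩
  dsimp only
  rcases eq_or_lt_of_le hkn with h | h
  · rw [h, psum_last]; exact h1
  · exact le_of_not_ge (Nat.findGreatest_is_greatest (Nat.lt_succ_self _) h)

instance prismCat (n : ℕ) : SmallCategory (Fin 2 × Fin (n + 1)) := Preorder.smallCategory _

/-- The universal prism map. -/
def prism {n : ℕ} (x : stdSimplex ℝ (Fin (n + 1)) × unitInterval) :
    SSet.toTop.obj (nerve (Fin 2 × Fin (n + 1))) :=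
  bpt (wpt x.1 (1 - x.2.1))

lemma exists_chain {n : ℕ} (p : stdSimplex ℝ (Fin (n + 1))) (t : unitInterval) :
    ∃ k : Fin (n + 1), wpt p (1 - t.1) ∈ suppOn (chain k) := by
  obtain ⟨k, h1, h2⟩ := exists_cut p (1 - t.1) (by linarith [t.2.2]) (by linarith [t.2.1])
  exact ⟨k, wpt_mem p _ k h1 h2⟩

lemma continuous_prism {n : ℕ} : Continuous (prism (n := n)) := by
  have hw : Continuous (fun x : stdSimplex ℝ (Fin (n + 1)) × unitInterval =>
      wpt x.1 (1 - x.2.1)) :=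
    continuous_wpt.comp (continuous_fst.prodMk
      (continuous_const.sub (continuous_subtype_val.comp continuous_snd)))
  refine (locallyFinite_of_finite (fun k : Fin (n + 1) =>
    (fun x : stdSimplex ℝ (Fin (n + 1)) × unitInterval => wpt x.1 (1 - x.2.1)) ⁻¹'
      suppOn (chain k))).continuous ?_ (fun k => (isClosed_suppOn _).preimage hw) ?_
  · rw [Set.eq_univ_iff_forall]
    rintro ⟨p, t⟩
    obtain ⟨k, hk⟩ := exists_chain p t
    exact Set.mem_iUnion.2 ⟨k, hk⟩
  · intro k
    exact (continuousOn_bpt (chain k) (chain_injective k)).comp hw.continuousOn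
      (fun x hx => hx)

lemma prism_natural {m n : ℕ} (f : Fin (m + 1) →o Fin (n + 1))
    (p : stdSimplex ℝ (Fin (m + 1))) (t : unitInterval) :
    SSet.toTop.map (nerveMap (prismMap f).monotone.functor) (prism (p, t)) =
      prism (stdSimplex.map f p, t) := by
  obtain ⟨k, hk⟩ := exists_chain p t
  have h : stdSimplex.map (chain k) (pull (chain k) (chain_injective k) ⟨_, hk⟩) =
      wpt p (1 - t.1) := map_pull (chain k) (chain_injective k) ⟨_, hk⟩
  simp only [prism]
  rw [← map_wpt, ← h, bpt_natural]

/-- The two ends of the prism. -/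
def endMap {n : ℕ} (b : Fin 2) : Fin (n + 1) →o Fin 2 × Fin (n + 1) :=
  ⟨fun i => (b, i), fun _ _ h => ⟨le_rfl, h⟩⟩

lemma map_endMap {n : ℕ} (b b' : Fin 2) (p : stdSimplex ℝ (Fin (n + 1))) (i : Fin (n + 1)) :
    stdSimplex.map (endMap b) p (b', i) = if b' = b then p i else 0 := by
  rw [map_val]
  split_ifs with h
  · subst h
    have : ∀ j : Fin (n + 1), endMap b' j = (b', i) ↔ j = i := by
      intro j
      change ((b', j) = (b', i)) ↔ _
      simp
    simp only [this]
    rw [Finset.filter_eq', if_pos (Finset.mem_univ _), Finset.sum_singleton]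
  · apply Finset.sum_eq_zero
    intro j hj
    have hj2 : endMap b j = (b', i) := by simpa using hj
    exact absurd (congrArg Prod.fst hj2).symm h

lemma prism_zero {n : ℕ} (p : stdSimplex ℝ (Fin (n + 1))) :
    prism (p, 0) = npt (endMap 0).monotone.functor p := by
  rw [← bpt_map, prism]
  congr 1
  ext ⟨b, i⟩
  rw [wpt_apply, map_endMap, wfun]
  have h1 : psum p (i.val + 1) ≤ 1 := by
    rw [← psum_last p]; exact psum_mono p (by omega)
  have h2 : psum p i.val ≤ psum p (i.val + 1) := psum_mono p (by omega)
  have h3 := psum_succ p i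
  have h4 := h2.trans h1
  by_cases hb : b = 0
  · simp [hb, h1, h4]; linarith
  · simp [hb, h1, h4]

lemma prism_one {n : ℕ} (p : stdSimplex ℝ (Fin (n + 1))) :
    prism (p, 1) = npt (endMap 1).monotone.functor p := by
  rw [← bpt_map, prism]
  congr 1
  ext ⟨b, i⟩
  rw [wpt_apply, map_endMap, wfun]
  have h1 : 0 ≤ psum p i.val := by
    rw [← psum_zero p]; exact psum_mono p (by omega)
  have h2 : psum p i.val ≤ psum p (i.val + 1) := psum_mono p (by omega)
  have h3 := psum_succ p i
  have h4 := h1.trans h2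
  by_cases hb : b = 0
  · simp [hb, h1, h4]
  · have hb1 : b = 1 := by omega
    simp [hb1, h1, h4]; linarith

/-- The functor out of the prism over a chain. -/
def prismFunctor {C D : Type} [SmallCategory C] [SmallCategory D] (Φ : Fin 2 × C ⥤ D)
    {n : ℕ} (σ : Fin (n + 1) ⥤ C) : Fin 2 × Fin (n + 1) ⥤ D where
  obj x := Φ.obj (x.1, σ.obj x.2)
  map {x y} f := Φ.map (X := (x.1, σ.obj x.2)) (Y := (y.1, σ.obj y.2))
    ⟨homOfLE (leOfHom f).1, σ.map (homOfLE (leOfHom f).2)⟩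
  map_id x := by
    rw [← Φ.map_id]
    congr 1
    exact Prod.ext (Subsingleton.elim _ _) (σ.map_id _)
  map_comp f g := by
    rw [← Φ.map_comp]
    congr 1
    refine Prod.ext (Subsingleton.elim _ _) ?_
    exact σ.map_comp _ _

/-- The end of a functor on the cylinder. -/
abbrev cylEnd {C D : Type} [SmallCategory C] [SmallCategory D] (Φ : Fin 2 × C ⥤ D)
    (b : Fin 2) : C ⥤ D := Prod.sectR b C ⋙ Φ

lemma endMap_prismFunctor {C D : Type} [SmallCategory C] [SmallCategory D] (Φ : Fin 2 × C ⥤ D)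
    {n : ℕ} (σ : Fin (n + 1) ⥤ C) (b : Fin 2) :
    (endMap b).monotone.functor ⋙ prismFunctor Φ σ = σ ⋙ cylEnd Φ b := rfl

lemma prismMap_prismFunctor {C D : Type} [SmallCategory C] [SmallCategory D] (Φ : Fin 2 × C ⥤ D)
    {m n : ℕ} (f : Fin (m + 1) →o Fin (n + 1)) (σ : Fin (n + 1) ⥤ C) :
    (prismMap f).monotone.functor ⋙ prismFunctor Φ σ =
      prismFunctor Φ (f.monotone.functor ⋙ σ) := rfl

lemma nerveMap_comp' {C D E : Type} [SmallCategory C] [SmallCategory D] [SmallCategory E]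
    (F : C ⥤ D) (G : D ⥤ E) : nerveMap (F ⋙ G) = nerveMap F ≫ nerveMap G := rfl

lemma cyl_homotopic {C D : Type} [SmallCategory C] [SmallCategory D] (Φ : Fin 2 × C ⥤ D) :
    ContinuousMap.Homotopic (SSet.toTop.map (nerveMap (cylEnd Φ 0))).hom
      (SSet.toTop.map (nerveMap (cylEnd Φ 1))).hom := by
  obtain ⟨g, hg⟩ := npt_desc (C := C)
    (Z := TopCat.of C(unitInterval, SSet.toTop.obj (nerve D)))
    (fun a σ => ContinuousMap.curry
      ⟨fun x => SSet.toTop.map (nerveMap (prismFunctor Φ σ)) (prism x),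
        (ContinuousMap.continuous (SSet.toTop.map (nerveMap (prismFunctor Φ σ))).hom).comp
          continuous_prism⟩)
    (by
      intro a b f σ p
      ext t
      simp only [ContinuousMap.curry_apply, ContinuousMap.coe_mk]
      rw [← prism_natural, ← prismMap_prismFunctor, nerveMap_comp', Functor.map_comp]
      rfl)
  have hend : ∀ (b : Fin 2) (t : unitInterval)
      (_ : ∀ (n : ℕ) (p : stdSimplex ℝ (Fin (n + 1))),
        prism (p, t) = npt (endMap b).monotone.functor p)
      (z : SSet.toTop.obj (nerve C)),
      (g z : C(unitInterval, SSet.toTop.obj (nerve D))) t =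
        SSet.toTop.map (nerveMap (cylEnd Φ b)) z := by
    intro b t ht z
    have : (g ≫ TopCat.ofHom (Y := SSet.toTop.obj (nerve D))
        ⟨fun u : C(unitInterval, SSet.toTop.obj (nerve D)) => u t,
          ContinuousEvalConst.continuous_eval_const t⟩) = SSet.toTop.map (nerveMap (cylEnd Φ b)) := by
      apply npt_hom_ext
      intro a σ p
      rw [npt_functor, ← endMap_prismFunctor, ← npt_functor, ← ht]
      exact congrArg (fun u : C(unitInterval, SSet.toTop.obj (nerve D)) => u t) (hg a σ p)
    exact ConcreteCategory.congr_hom this z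
  let G : C(SSet.toTop.obj (nerve C), C(unitInterval, SSet.toTop.obj (nerve D))) := g.hom
  refine ⟨⟨G.uncurry.comp ContinuousMap.prodSwap, ?_, ?_⟩⟩
  · intro z
    exact hend 0 0 (fun n p => prism_zero p) z
  · intro z
    exact hend 1 1 (fun n p => prism_one p) z

lemma natTrans_homotopic {C D : Type} [SmallCategory C] [SmallCategory D] {F G : C ⥤ D}
    (α : F ⟶ G) :
    ContinuousMap.Homotopic (SSet.toTop.map (nerveMap F)).hom
      (SSet.toTop.map (nerveMap G)).hom := by
  have h := cyl_homotopic (Functor.uncurry.obj (ComposableArrows.mk₁ α))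
  have h0 : cylEnd (Functor.uncurry.obj (ComposableArrows.mk₁ α)) 0 = F := by
    refine CategoryTheory.Functor.ext (fun c => rfl) ?_
    intro X Y f
    change ((ComposableArrows.mk₁ α).map (𝟙 0)).app X ≫ F.map f = 𝟙 _ ≫ F.map f ≫ 𝟙 _
    rw [CategoryTheory.Functor.map_id, Category.comp_id]
    rfl
  have h1 : cylEnd (Functor.uncurry.obj (ComposableArrows.mk₁ α)) 1 = G := by
    refine CategoryTheory.Functor.ext (fun c => rfl) ?_
    intro X Y f
    change ((ComposableArrows.mk₁ α).map (𝟙 1)).app X ≫ G.map f = 𝟙 _ ≫ G.map f ≫ 𝟙 _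
    rw [CategoryTheory.Functor.map_id, Category.comp_id]
    rfl
  rw [h0, h1] at h
  exact h

lemma const_nerve {C : Type} [SmallCategory C] (c : C) (z : SSet.toTop.obj (nerve C)) :
    SSet.toTop.map (nerveMap ((Functor.const C).obj c)) z =
      npt (a := 0) ((Functor.const _).obj c) default := by
  have : SSet.toTop.map (nerveMap ((Functor.const C).obj c)) =
      TopCat.ofHom (ContinuousMap.const _ (npt (a := 0) ((Functor.const _).obj c) default)) := by
    apply npt_hom_ext
    intro a σ p
    rw [npt_functor]
    let f : Fin (a + 1) →o Fin (0 + 1) := ⟨fun _ => 0, fun _ _ _ => le_rfl⟩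
    refine (npt_comp f ((Functor.const _).obj c) p).trans ?_
    change npt _ _ = npt _ _
    congr 1
    exact Subsingleton.elim (α := stdSimplex ℝ (Fin 1)) _ _
  exact ConcreteCategory.congr_hom this z

lemma contractible_aux {C : Type} [SmallCategory C] (c : C)
    (h : ContinuousMap.Homotopic (SSet.toTop.map (nerveMap (𝟭 C))).hom
      (SSet.toTop.map (nerveMap ((Functor.const C).obj c))).hom) :
    ContractibleSpace (SSet.toTop.obj (nerve C)) := by
  rw [contractible_iff_id_nullhomotopic]
  refine ⟨npt (a := 0) ((Functor.const _).obj c) default, ?_⟩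
  have h1 : (SSet.toTop.map (nerveMap (𝟭 C))).hom = ContinuousMap.id _ := by
    have : nerveMap (𝟭 C) = 𝟙 (nerve C) := rfl
    rw [this, CategoryTheory.Functor.map_id]
    rfl
  have h2 : (SSet.toTop.map (nerveMap ((Functor.const C).obj c))).hom =
      ContinuousMap.const _ (npt (a := 0) ((Functor.const _).obj c) default) := by
    ext z
    exact const_nerve c z
  rw [h1, h2] at h
  exact h

end

/-- A (nonempty) small category with pairwise coproducts is contractible,
i.e. its classifying space `B𝒞 = |N𝒞|` is a contractible topological space; dually, a
(nonempty) small category with pairwise products is contractible.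
(Nonemptiness is implicit in the paper, which chooses an object `c₀ ∈ 𝒞`.) -/
theorem contractible_of_pairwise_coproducts_or_products
    (C : Type) [SmallCategory C] [Nonempty C]
    (h : HasBinaryCoproducts C ∨ HasBinaryProducts C) :
    ContractibleSpace (SSet.toTop.obj (nerve C)) := by
  obtain ⟨c⟩ := ‹Nonempty C›
  apply contractible_aux c
  rcases h with h | h
  · let G : C ⥤ C := coprod.functor.obj c
    let α : 𝟭 C ⟶ G :=
      { app := fun x => coprod.inr
        naturality := fun x y f => (coprod.inr_map (𝟙 c) f).symm }
    let β : (Functor.const C).obj c ⟶ G :=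
      { app := fun x => coprod.inl
        naturality := fun x y f => (coprod.inl_map (𝟙 c) f).symm }
    exact (natTrans_homotopic α).trans (natTrans_homotopic β).symm
  · let G : C ⥤ C := prod.functor.obj c
    let α : G ⟶ 𝟭 C :=
      { app := fun x => prod.snd
        naturality := fun x y f => prod.map_snd (𝟙 c) f }
    let β : G ⟶ (Functor.const C).obj c :=
      { app := fun x => prod.fst
        naturality := fun x y f => prod.map_fst (𝟙 c) f }
    exact (natTrans_homotopic α).symm.trans (natTrans_homotopic β)
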